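/- Let m ≥ 3 and n = 3m + 2. Then for every connected simple graph G on n vertices with domination number 3, ρ(G) ≥ ρ(G_2(m−1, m−3, m−1)), with equality if and only if G is isomorphic to G_2(m−1, m−3, m−1). -/

import Mathlib

open SimpleGraph

/-- Adjacency matrix of a simple graph over ℝ. -/
noncomputable def adjMat {V : Type*} (G : SimpleGraph V) : Matrix V V ℝ :=
  Matrix.of fun i j => @ite ℝ (G.Adj i j) (Classical.propDecidable _) 1 0

/-- Spectral radius: the largest eigenvalue (supremum of the real spectrum)
of the adjacency matrix. -/
noncomputable def specRad {V : Type*} [Fintype V] [DecidableEq V]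
    (G : SimpleGraph V) : ℝ :=
  sSup (spectrum ℝ (adjMat G))

/-- `D` is a dominating set of `G`. -/
def IsDomSet {V : Type*} (G : SimpleGraph V) (D : Finset V) : Prop :=
  ∀ v ∉ D, ∃ u ∈ D, G.Adj u v

/-- The domination number of `G`. -/
noncomputable def domNum {V : Type*} [Fintype V] (G : SimpleGraph V) : ℕ :=
  sInf {k | ∃ D : Finset V, IsDomSet G D ∧ D.card = k}

/-- The tree `G₂(a,b,c)`: the path v1 v4 v5 v2 v6 v7 v3 (vertices `Sum.inl 0, …, Sum.inl 6`
in path order), with `a` pendant edges at v1, `b` pendant edges at v2 and `c` pendant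
edges at v3. -/
def G2graph (a b c : ℕ) : SimpleGraph (Fin 7 ⊕ (Fin a ⊕ Fin b ⊕ Fin c)) :=
  SimpleGraph.fromRel (fun x y =>
    (x = Sum.inl 0 ∧ y = Sum.inl 1) ∨
    (x = Sum.inl 1 ∧ y = Sum.inl 2) ∨
    (x = Sum.inl 2 ∧ y = Sum.inl 3) ∨
    (x = Sum.inl 3 ∧ y = Sum.inl 4) ∨
    (x = Sum.inl 4 ∧ y = Sum.inl 5) ∨
    (x = Sum.inl 5 ∧ y = Sum.inl 6) ∨
    (∃ j : Fin a, x = Sum.inl 0 ∧ y = Sum.inr (Sum.inl j)) ∨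
    (∃ j : Fin b, x = Sum.inl 3 ∧ y = Sum.inr (Sum.inr (Sum.inl j))) ∨
    (∃ j : Fin c, x = Sum.inl 6 ∧ y = Sum.inr (Sum.inr (Sum.inr j))))

/-!
Let `t` be the spectral radius of `G₂(m - 1, m - 3, m - 1)`. It satisfies `m < t² ≤ m + 1`, and a
nonnegative vector `x` with `t x ≤ A x` and `t x ≠ A x` shows that `t < ρ(G)`. When some vertex
has degree greater than `m`, the Perron vector of the star around it is such an `x`. Otherwise the
three closed neighbourhoods of a dominating set have at most `m + 1` vertices each and cover
`3m + 2` vertices. If two of them meet, this count leaves them a single common vertex and degree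
`m` each, and the sum of the two star vectors is such an `x`. If they are disjoint, their sizes are
`m + 1`, `m + 1`, `m`, and connectedness joins one of the three hubs to the other two. The two
connecting paths pass through either distinct neighbours or the same neighbour of this hub, so
that `G` contains a spanning tree `G₂(p, q, r)` or `forkGraph`. For each such tree, solving the
eigenvalue equations for `t` at all vertices but one gives a positive `x`, whose defect at the
remaining vertex is positive unless the tree is `G₂(m - 1, m - 3, m - 1)`; then any further edge
of `G` supplies the strict inequality.
-/

namespace DominationSpectral

open Finset

section AdjacencyMatrix

variable {V : Type*} {G H : SimpleGraph V}

lemma adjMat_eq_adjMatrix [DecidableRel G.Adj] : adjMat G = G.adjMatrix ℝ := by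
  ext i j
  simp only [adjMat, Matrix.of_apply, adjMatrix_apply]
  congr

lemma isHermitian_adjMat : (adjMat G).IsHermitian := by
  classical
  rw [adjMat_eq_adjMatrix]
  ext i j
  simp [adj_comm]

variable [Fintype V]

lemma adjMat_mulVec_apply [DecidableRel G.Adj] (x : V → ℝ) (v : V) :
    (adjMat G).mulVec x v = ∑ u ∈ G.neighborFinset v, x u := by
  rw [adjMat_eq_adjMatrix, adjMatrix_mulVec_apply]

lemma le_adjMat_mulVec_of_adj {x : V → ℝ} (hx : 0 ≤ x) {u v : V} (h : G.Adj v u) :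
    x u ≤ (adjMat G).mulVec x v := by
  classical
  rw [adjMat_mulVec_apply]
  exact Finset.single_le_sum (fun w _ => hx w) (by simpa using h)

lemma neighborFinset_subset_of_le [DecidableRel G.Adj] [DecidableRel H.Adj] (hGH : G ≤ H) (v : V) :
    G.neighborFinset v ⊆ H.neighborFinset v := fun u hu => by
  rw [mem_neighborFinset] at hu ⊢
  exact hGH hu

lemma adjMat_mulVec_mono (hGH : G ≤ H) {x : V → ℝ} (hx : 0 ≤ x) :
    (adjMat G).mulVec x ≤ (adjMat H).mulVec x := fun v => by
  classical
  rw [adjMat_mulVec_apply, adjMat_mulVec_apply]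
  exact Finset.sum_le_sum_of_subset_of_nonneg (neighborFinset_subset_of_le hGH v)
    fun u _ _ => hx u

lemma adjMat_mulVec_lt (hGH : G < H) {x : V → ℝ} (hx : ∀ v, 0 < x v) :
    (adjMat G).mulVec x < (adjMat H).mulVec x := by
  classical
  obtain ⟨u, v, hH, hG⟩ : ∃ u v, H.Adj u v ∧ ¬ G.Adj u v := by
    by_contra! hle
    exact hGH.not_ge hle
  refine Pi.lt_def.2 ⟨adjMat_mulVec_mono hGH.le fun v => (hx v).le, u, ?_⟩
  rw [adjMat_mulVec_apply, adjMat_mulVec_apply]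
  exact Finset.sum_lt_sum_of_subset (i := v) (neighborFinset_subset_of_le hGH.le u)
    (by simpa using hH) (by simpa using hG) (hx v) fun w _ _ => (hx w).le

lemma smul_abs_le_adjMat_mulVec_abs {μ : ℝ} {y : V → ℝ} (hy : (adjMat G).mulVec y = μ • y) :
    μ • |y| ≤ (adjMat G).mulVec |y| := fun v => by
  classical
  calc μ * |y v| ≤ |μ * y v| := by
        rw [abs_mul]
        exact mul_le_mul_of_nonneg_right (le_abs_self μ) (abs_nonneg _)
    _ = |(adjMat G).mulVec y v| := by rw [hy, Pi.smul_apply, smul_eq_mul]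
    _ ≤ (adjMat G).mulVec |y| v := by
        rw [adjMat_mulVec_apply, adjMat_mulVec_apply]
        exact Finset.abs_sum_le_sum_abs _ _

lemma le_of_smul_le_mulVec_of_pos_eigenvector {t μ : ℝ} {x z : V → ℝ} (hx : ∀ v, 0 < x v)
    (hAx : (adjMat G).mulVec x = t • x) (hz : 0 ≤ z) (hz₀ : z ≠ 0)
    (hAz : μ • z ≤ (adjMat G).mulVec z) : μ ≤ t := by
  have hpos : 0 < x ⬝ᵥ z := by
    obtain ⟨v, hv⟩ := Function.ne_iff.1 hz₀
    exact Finset.sum_pos' (fun i _ => mul_nonneg (hx i).le (hz i))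
      ⟨v, Finset.mem_univ v, mul_pos (hx v) ((hz v).lt_of_ne' hv)⟩
  refine le_of_mul_le_mul_right ?_ hpos
  calc μ * (x ⬝ᵥ z) = x ⬝ᵥ (μ • z) := by rw [dotProduct_smul, smul_eq_mul]
    _ ≤ x ⬝ᵥ (adjMat G).mulVec z :=
        dotProduct_le_dotProduct_of_nonneg_left hAz fun v => (hx v).le
    _ = (adjMat G).mulVec x ⬝ᵥ z := by
        rw [Matrix.dotProduct_mulVec, ← Matrix.mulVec_transpose,
          ← Matrix.conjTranspose_eq_transpose_of_trivial, isHermitian_adjMat.eq]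
    _ = t * (x ⬝ᵥ z) := by rw [hAx, smul_dotProduct, smul_eq_mul]

end AdjacencyMatrix

section SpectralRadius

variable {V : Type*} [Fintype V] [DecidableEq V] {G : SimpleGraph V}

lemma mem_spectrum_adjMat_iff {μ : ℝ} :
    μ ∈ spectrum ℝ (adjMat G) ↔ ∃ y : V → ℝ, y ≠ 0 ∧ (adjMat G).mulVec y = μ • y := by
  rw [← Matrix.spectrum_toLin', ← Module.End.hasEigenvalue_iff_mem_spectrum]
  constructor
  · intro h
    obtain ⟨y, hy⟩ := h.exists_hasEigenvector
    exact ⟨y, hy.2, by simpa using hy.apply_eq_smul⟩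
  · rintro ⟨y, hy, h⟩
    exact Module.End.hasEigenvalue_of_hasEigenvector
      ⟨Module.End.mem_eigenspace_iff.2 (by simpa using h), hy⟩

lemma le_specRad_of_mem_spectrum {μ : ℝ} (hμ : μ ∈ spectrum ℝ (adjMat G)) : μ ≤ specRad G := by
  refine le_csSup (Set.Finite.bddAbove ?_) hμ
  rw [isHermitian_adjMat.spectrum_real_eq_range_eigenvalues]
  exact Set.finite_range _

lemma posSemidef_algebraMap_specRad_sub_adjMat :
    (algebraMap ℝ (Matrix V V ℝ) (specRad G) - adjMat G).PosSemidef := by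
  rw [Matrix.posSemidef_iff_isHermitian_and_spectrum_nonneg]
  refine ⟨Matrix.IsHermitian.sub ?_ isHermitian_adjMat, ?_⟩
  · rw [Matrix.IsHermitian, Matrix.algebraMap_eq_diagonal, Matrix.diagonal_conjTranspose]
    simp
  · rw [← spectrum.singleton_sub_eq]
    rintro _ ⟨_, rfl, μ, hμ, rfl⟩
    exact sub_nonneg.2 (le_specRad_of_mem_spectrum hμ)

/- Otherwise `x` would be a null vector of the positive semidefinite form `specRad G • 1 - A`. -/
lemma lt_specRad_of_smul_lt_mulVec {t : ℝ} {x : V → ℝ} (hx : 0 ≤ x)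
    (h : t • x < (adjMat G).mulVec x) : t < specRad G := by
  by_contra! hρ
  set M := algebraMap ℝ (Matrix V V ℝ) (specRad G) - adjMat G with hM
  have hMx : M.mulVec x = specRad G • x - (adjMat G).mulVec x := by
    rw [hM, Matrix.sub_mulVec, Algebra.algebraMap_eq_smul_one, Matrix.smul_mulVec,
      Matrix.one_mulVec]
  have hρx : specRad G • x ≤ t • x := smul_le_smul_of_nonneg_right hρ hx
  have hneg : M.mulVec x < 0 := by
    rw [hMx, sub_neg]
    exact hρx.trans_lt h
  have hpsd : M.PosSemidef := posSemidef_algebraMap_specRad_sub_adjMat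
  have hzero : star x ⬝ᵥ M.mulVec x = 0 := by
    refine le_antisymm ?_ (hpsd.dotProduct_mulVec_nonneg x)
    simpa using dotProduct_le_dotProduct_of_nonneg_left hneg.le (w := x) hx
  exact hneg.ne ((hpsd.dotProduct_mulVec_zero_iff x).1 hzero)

lemma lt_specRad_of_smul_le_mulVec_of_eq_zero (hG : G.Connected) {t : ℝ} {x : V → ℝ}
    (hx : 0 ≤ x) (h : t • x ≤ (adjMat G).mulVec x) {a b : V} (ha : x a = 0) (hb : x b ≠ 0) :
    t < specRad G := by
  refine lt_specRad_of_smul_lt_mulVec hx (h.lt_of_ne fun heq => hb ?_)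
  have zero_of_adj : ∀ u v, G.Adj u v → x u = 0 → x v = 0 := fun u v huv hu =>
    le_antisymm ((le_adjMat_mulVec_of_adj hx huv).trans (by simp [← heq, hu])) (hx v)
  obtain ⟨p⟩ := hG.preconnected a b
  induction p with
  | nil => exact ha
  | cons huv _ ih => exact ih (zero_of_adj _ _ huv ha) hb

lemma le_specRad_of_smul_le_mulVec {t : ℝ} {x : V → ℝ} (hx : 0 ≤ x) (hx₀ : x ≠ 0)
    (h : t • x ≤ (adjMat G).mulVec x) : t ≤ specRad G := by
  by_contra! hρ
  have hlt : specRad G • x < t • x := smul_lt_smul_of_pos_right hρ (hx.lt_of_ne' hx₀)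
  exact (lt_specRad_of_smul_lt_mulVec hx (hlt.trans_le h)).false

lemma specRad_eq_of_pos_eigenvector [Nonempty V] {t : ℝ} {x : V → ℝ} (hx : ∀ v, 0 < x v)
    (hAx : (adjMat G).mulVec x = t • x) : specRad G = t := by
  have ht : t ∈ spectrum ℝ (adjMat G) :=
    mem_spectrum_adjMat_iff.2 ⟨x, fun h => (hx (Classical.arbitrary V)).ne' (congrFun h _), hAx⟩
  refine le_antisymm (csSup_le ⟨t, ht⟩ fun μ hμ => ?_) (le_specRad_of_mem_spectrum ht)
  obtain ⟨y, hy, hAy⟩ := mem_spectrum_adjMat_iff.1 hμ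
  exact le_of_smul_le_mulVec_of_pos_eigenvector hx hAx (abs_nonneg y) (by simpa using hy)
    (smul_abs_le_adjMat_mulVec_abs hAy)

lemma specRad_mem_spectrum [Nonempty V] : specRad G ∈ spectrum ℝ (adjMat G) := by
  rw [specRad, isHermitian_adjMat.spectrum_real_eq_range_eigenvalues]
  exact (Set.range_nonempty _).csSup_mem (Set.finite_range _)

lemma specRad_mono [Nonempty V] {H : SimpleGraph V} (hGH : G ≤ H) : specRad G ≤ specRad H := by
  obtain ⟨y, hy, hAy⟩ := mem_spectrum_adjMat_iff.1 (specRad_mem_spectrum (G := G))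
  exact le_specRad_of_smul_le_mulVec (abs_nonneg y) (by simpa using hy)
    ((smul_abs_le_adjMat_mulVec_abs hAy).trans (adjMat_mulVec_mono hGH (abs_nonneg y)))

variable {W : Type*} [Fintype W] [DecidableEq W] {H : SimpleGraph W}

lemma specRad_eq_of_iso (e : G ≃g H) : specRad G = specRad H := by
  classical
  have hA : adjMat H = Matrix.reindexAlgEquiv ℝ ℝ e.toEquiv (adjMat G) := by
    rw [adjMat_eq_adjMatrix, adjMat_eq_adjMatrix, Matrix.coe_reindexAlgEquiv]
    exact (e.reindex_adjMatrix ℝ).symm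
  rw [specRad, specRad, hA, AlgEquiv.spectrum_eq]

lemma specRad_le_of_le_comap [Nonempty W] (f : W ≃ V) (hH : H ≤ G.comap f) :
    specRad H ≤ specRad G :=
  (specRad_mono hH).trans_eq (specRad_eq_of_iso (Iso.comap f G))

end SpectralRadius

section ClosedNeighborhoods

variable {V : Type*} [Fintype V] [DecidableEq V] {G : SimpleGraph V} [DecidableRel G.Adj]

/-- The closed neighbourhood `N[v]` of a vertex. -/
def closedNbhd (G : SimpleGraph V) [DecidableRel G.Adj] (v : V) : Finset V :=
  insert v (G.neighborFinset v)

lemma mem_closedNbhd {u v : V} : u ∈ closedNbhd G v ↔ u = v ∨ G.Adj v u := by simp [closedNbhd]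

lemma self_mem_closedNbhd (v : V) : v ∈ closedNbhd G v := Finset.mem_insert_self _ _

lemma card_closedNbhd (v : V) : #(closedNbhd G v) = G.degree v + 1 := by
  rw [closedNbhd, card_insert_of_notMem (by simp), card_neighborFinset_eq_degree]

lemma closedNbhd_inter_closedNbhd {u v : V} (huv : u ≠ v) (h : ¬ G.Adj u v) :
    closedNbhd G u ∩ closedNbhd G v = G.neighborFinset u ∩ G.neighborFinset v := by
  ext w
  simp only [mem_inter, mem_closedNbhd, mem_neighborFinset]
  grind [adj_comm]

end ClosedNeighborhoods

section StarVectors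

variable {V : Type*} [DecidableEq V] {G : SimpleGraph V} [DecidableRel G.Adj] {t : ℝ}

/-- Weight `t` at `v` and weight `1` at the neighbours of `v`: for `t ^ 2 = G.degree v`, this is the
Perron vector of the star centred at `v`, extended by zero. -/
def starVec (G : SimpleGraph V) [DecidableRel G.Adj] (t : ℝ) (v : V) : V → ℝ :=
  fun u => (if u = v then t else 0) + if G.Adj v u then 1 else 0

lemma starVec_self (v : V) : starVec G t v v = t := by simp [starVec]

lemma starVec_nonneg (ht : 0 ≤ t) (v : V) : 0 ≤ starVec G t v := fun u => by
  simp only [starVec, Pi.zero_apply]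
  positivity

variable [Fintype V]

lemma starVec_eq_zero {u v : V} (h : u ∉ closedNbhd G v) : starVec G t v u = 0 := by
  simp_all [starVec, mem_closedNbhd]

lemma adjMat_mulVec_starVec_self (v : V) :
    (adjMat G).mulVec (starVec G t v) v = G.degree v := by
  rw [adjMat_mulVec_apply]
  simp [starVec, Finset.sum_add_distrib, Finset.filter_true_of_mem]

lemma adjMat_mulVec_starVec_of_ne {u v : V} (h : u ≠ v) :
    (adjMat G).mulVec (starVec G t v) u =
      t * starVec G t v u + #(G.neighborFinset u ∩ G.neighborFinset v) := by
  rw [adjMat_mulVec_apply]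
  have hcommon :
      {w ∈ G.neighborFinset u | G.Adj v w} = G.neighborFinset u ∩ G.neighborFinset v := by
    ext w
    simp
  simp [starVec, Finset.sum_add_distrib, h, hcommon, adj_comm]

lemma lt_specRad_of_sq_le_degree (hG : G.Connected) (ht : 0 < t) {v : V}
    (hv : t ^ 2 ≤ G.degree v) (hcard : t ^ 2 + 1 < Fintype.card V) : t < specRad G := by
  have hx := starVec_nonneg (G := G) ht.le v
  have hle : t • starVec G t v ≤ (adjMat G).mulVec (starVec G t v) := fun u => by
    rw [Pi.smul_apply, smul_eq_mul]
    obtain rfl | hu := eq_or_ne u v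
    · rw [starVec_self, adjMat_mulVec_starVec_self, ← sq]
      exact hv
    · rw [adjMat_mulVec_starVec_of_ne hu]
      exact le_add_of_nonneg_right (Nat.cast_nonneg _)
  obtain hlt | heq := hv.lt_or_eq
  · refine lt_specRad_of_smul_lt_mulVec hx (Pi.lt_def.2 ⟨hle, v, ?_⟩)
    rwa [Pi.smul_apply, smul_eq_mul, starVec_self, adjMat_mulVec_starVec_self, ← sq]
  · obtain ⟨w, -, hw⟩ : ∃ w ∈ univ, w ∉ closedNbhd G v := by
      apply exists_mem_notMem_of_card_lt_card
      rw [card_closedNbhd, card_univ]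
      rw [heq] at hcard
      exact_mod_cast hcard
    exact lt_specRad_of_smul_le_mulVec_of_eq_zero hG hx hle (starVec_eq_zero hw)
      (starVec_self (G := G) (t := t) v ▸ ht.ne')

lemma lt_specRad_of_sq_le_degree_add_card_inter (hG : G.Connected) (ht : 0 < t) {u v w : V}
    (huv : u ≠ v) (hwu : w ∉ closedNbhd G u) (hwv : w ∉ closedNbhd G v)
    (hu : t ^ 2 ≤ G.degree u + #(G.neighborFinset u ∩ G.neighborFinset v))
    (hv : t ^ 2 ≤ G.degree v + #(G.neighborFinset u ∩ G.neighborFinset v)) : t < specRad G := by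
  have hx := add_nonneg (starVec_nonneg (G := G) ht.le u) (starVec_nonneg (G := G) ht.le v)
  refine lt_specRad_of_smul_le_mulVec_of_eq_zero hG hx (fun z => ?_) (a := w) (b := u) ?_ ?_
  · simp only [Matrix.mulVec_add, Pi.smul_apply, Pi.add_apply, smul_eq_mul, mul_add]
    obtain rfl | hzu := eq_or_ne z u
    · rw [starVec_self, adjMat_mulVec_starVec_self, adjMat_mulVec_starVec_of_ne huv]
      linarith
    obtain rfl | hzv := eq_or_ne z v
    · rw [starVec_self, adjMat_mulVec_starVec_self, adjMat_mulVec_starVec_of_ne hzu, inter_comm]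
      linarith
    · rw [adjMat_mulVec_starVec_of_ne hzu, adjMat_mulVec_starVec_of_ne hzv]
      gcongr <;> exact le_add_of_nonneg_right (Nat.cast_nonneg _)
  · rw [Pi.add_apply, starVec_eq_zero hwu, starVec_eq_zero hwv, add_zero]
  · have := starVec_nonneg (G := G) ht.le v u
    rw [Pi.add_apply, starVec_self]
    exact (add_pos_of_pos_of_nonneg ht this).ne'

end StarVectors

section HubTrees

variable {p q r : ℕ}

/-- The vertices of a tree with hubs `inl 0`, `inl 3` and `inl 6` that carry `p`, `q` and `r`
pendent vertices respectively, numbered as in `G2graph`. -/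
abbrev HubTreeVertex (p q r : ℕ) : Type :=
  Fin 7 ⊕ (Fin p ⊕ Fin q ⊕ Fin r)

/-- The variant of `G2graph a b c` in which the paths from the outer hubs `inl 0` and `inl 6` reach
the central hub `inl 3` through the same neighbour `inl 2`; the vertex `inl 4` becomes a further
pendent vertex of `inl 3`. -/
def forkGraph (a b c : ℕ) : SimpleGraph (HubTreeVertex a b c) :=
  SimpleGraph.fromRel (fun x y =>
    (x = Sum.inl 0 ∧ y = Sum.inl 1) ∨
    (x = Sum.inl 1 ∧ y = Sum.inl 2) ∨
    (x = Sum.inl 2 ∧ y = Sum.inl 3) ∨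
    (x = Sum.inl 3 ∧ y = Sum.inl 4) ∨
    (x = Sum.inl 2 ∧ y = Sum.inl 5) ∨
    (x = Sum.inl 5 ∧ y = Sum.inl 6) ∨
    (∃ j : Fin a, x = Sum.inl 0 ∧ y = Sum.inr (Sum.inl j)) ∨
    (∃ j : Fin b, x = Sum.inl 3 ∧ y = Sum.inr (Sum.inr (Sum.inl j))) ∨
    (∃ j : Fin c, x = Sum.inl 6 ∧ y = Sum.inr (Sum.inr (Sum.inr j))))

/-- The vector with values `f` on the seven inner vertices and values `a`, `b`, `c` on the pendent
vertices at `inl 0`, `inl 3`, `inl 6`. -/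
def classVec (f : Fin 7 → ℝ) (a b c : ℝ) : HubTreeVertex p q r → ℝ :=
  Sum.elim f (Sum.elim (fun _ => a) (Sum.elim (fun _ => b) fun _ => c))

lemma classVec_pos {f : Fin 7 → ℝ} {a b c : ℝ} (hf : ∀ i, 0 < f i) (ha : 0 < a) (hb : 0 < b)
    (hc : 0 < c) (v : HubTreeVertex p q r) : 0 < classVec f a b c v := by
  rcases v with i | _ | _ | _
  exacts [hf i, ha, hb, hc]

lemma adjMat_G2graph_mulVec_classVec (f : Fin 7 → ℝ) (a b c : ℝ) :
    (adjMat (G2graph p q r)).mulVec (classVec f a b c) =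
      classVec ![p * a + f 1, f 0 + f 2, f 1 + f 3, f 2 + f 4 + q * b, f 3 + f 5, f 4 + f 6,
        f 5 + r * c] (f 0) (f 3) (f 6) := by
  classical
  funext v
  simp only [adjMat_eq_adjMatrix, Matrix.mulVec, dotProduct, adjMatrix_apply,
    Fintype.sum_sum_type, Fin.sum_univ_seven]
  rcases v with i | j | j | j
  · fin_cases i <;> simp [G2graph, classVec, add_comm]
  all_goals simp [G2graph, classVec]

lemma adjMat_forkGraph_mulVec_classVec (f : Fin 7 → ℝ) (a b c : ℝ) :
    (adjMat (forkGraph p q r)).mulVec (classVec f a b c) =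
      classVec ![p * a + f 1, f 0 + f 2, f 1 + f 3 + f 5, f 2 + f 4 + q * b, f 3, f 2 + f 6,
        f 5 + r * c] (f 0) (f 3) (f 6) := by
  classical
  funext v
  simp only [adjMat_eq_adjMatrix, Matrix.mulVec, dotProduct, adjMatrix_apply,
    Fintype.sum_sum_type, Fin.sum_univ_seven]
  rcases v with i | j | j | j
  · fin_cases i <;> simp [forkGraph, classVec, add_comm]
  all_goals simp [forkGraph, classVec]

variable {t : ℝ}

/-- The solution of the eigenvalue equations of `G2graph` for `t` at every vertex but the central
hub, normalized to be `1` there. Here `R = (t ^ 2 - 1)⁻¹`, and `α`, `β` are the values of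
`t ^ 2 - 1 - R - p` and `t ^ 2 - 1 - R - r`. -/
noncomputable def G2Vec (t R α β : ℝ) : HubTreeVertex p q r → ℝ :=
  classVec ![t * R / α, (t ^ 2 * R / α + 1) * R, (t + t * R / α) * R, 1, (t + t * R / β) * R,
    (t ^ 2 * R / β + 1) * R, t * R / β] (R / α) (1 / t) (R / β)

lemma G2Vec_pos {R α β : ℝ} (ht : 0 < t) (hR : 0 < R) (hα : 0 < α) (hβ : 0 < β)
    (v : HubTreeVertex p q r) : 0 < G2Vec t R α β v := by
  refine classVec_pos (fun i => ?_) (by positivity) (by positivity) (by positivity) v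
  fin_cases i <;> simp only [Fin.zero_eta, Fin.mk_one, Fin.reduceFinMk, Fin.isValue,
    Matrix.cons_val, Matrix.cons_val_zero, Matrix.cons_val_one] <;> positivity

lemma adjMat_G2graph_mulVec_G2Vec {R α β : ℝ} (ht : t ≠ 0) (hR : R * (t ^ 2 - 1) = 1)
    (hα : α ≠ 0) (hβ : β ≠ 0) (hp : (p : ℝ) = t ^ 2 - 1 - R - α)
    (hr : (r : ℝ) = t ^ 2 - 1 - R - β) :
    (adjMat (G2graph p q r)).mulVec (G2Vec t R α β) = t • G2Vec t R α β +
      Pi.single (Sum.inl 3)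
        ((t ^ 2 * R ^ 2 * (1 / α + 1 / β) - (t ^ 2 - q - 2 - 2 * R)) / t : ℝ) := by
  rw [G2Vec, adjMat_G2graph_mulVec_classVec]
  funext v
  rcases v with i | j | j | j
  · fin_cases i <;>
      simp only [classVec, hp, hr, Fin.zero_eta, Fin.mk_one, Fin.reduceFinMk, Fin.isValue,
        Fin.reduceEq, Matrix.cons_val, Matrix.cons_val_zero, Matrix.cons_val_one, Sum.elim_inl,
        Sum.inl.injEq, Pi.add_apply, Pi.smul_apply, Pi.single_eq_same, Pi.single_eq_of_ne, ne_eq,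
        not_false_eq_true, smul_eq_mul, mul_one, add_zero] <;>
      field_simp
    · linear_combination R * hR
    · linear_combination -R * hR
    · linear_combination -α * hR
    · linear_combination 2 * α * β * hR
    · linear_combination -β * hR
    · linear_combination -R * hR
    · linear_combination R * hR
  all_goals
    simp only [classVec, Matrix.cons_val, Matrix.cons_val_zero, Sum.elim_inl, Sum.elim_inr,
      Pi.add_apply, Pi.smul_apply, Pi.single_eq_of_ne, ne_eq, reduceCtorEq, not_false_eq_true,
      smul_eq_mul, add_zero]
    field_simp

/-- The solution of the eigenvalue equations of `forkGraph` for `t` at every vertex but the fork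
`inl 2`, normalized to be `1` there. Here `P`, `Q`, `S` are the values of `t ^ 2 - 1 - p`,
`t ^ 2 - 1 - q`, `t ^ 2 - 1 - r`. -/
noncomputable def forkVec (t P Q S : ℝ) : HubTreeVertex p q r → ℝ :=
  classVec ![1 / P, (1 + 1 / P) / t, 1, t / Q, 1 / Q, (1 + 1 / S) / t, 1 / S]
    (1 / P / t) (1 / Q) (1 / S / t)

lemma forkVec_pos {P Q S : ℝ} (ht : 0 < t) (hP : 0 < P) (hQ : 0 < Q) (hS : 0 < S)
    (v : HubTreeVertex p q r) : 0 < forkVec t P Q S v := by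
  refine classVec_pos (fun i => ?_) (by positivity) (by positivity) (by positivity) v
  fin_cases i <;> simp only [Fin.zero_eta, Fin.mk_one, Fin.reduceFinMk, Fin.isValue,
    Matrix.cons_val, Matrix.cons_val_zero, Matrix.cons_val_one] <;> positivity

lemma adjMat_forkGraph_mulVec_forkVec {P Q S : ℝ} (ht : t ≠ 0) (hP : P ≠ 0) (hQ : Q ≠ 0)
    (hS : S ≠ 0) (hp : (p : ℝ) = t ^ 2 - 1 - P) (hq : (q : ℝ) = t ^ 2 - 1 - Q)
    (hr : (r : ℝ) = t ^ 2 - 1 - S) :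
    (adjMat (forkGraph p q r)).mulVec (forkVec t P Q S) = t • forkVec t P Q S +
      Pi.single (Sum.inl 2) ((t ^ 2 / Q + 1 / P + 1 / S - (t ^ 2 - 2)) / t : ℝ) := by
  rw [forkVec, adjMat_forkGraph_mulVec_classVec]
  funext v
  rcases v with i | j | j | j
  · fin_cases i <;>
      simp only [classVec, hp, hq, hr, Fin.zero_eta, Fin.mk_one, Fin.reduceFinMk, Fin.isValue,
        Fin.reduceEq, Matrix.cons_val, Matrix.cons_val_zero, Matrix.cons_val_one, Sum.elim_inl,
        Sum.inl.injEq, Pi.add_apply, Pi.smul_apply, Pi.single_eq_same, Pi.single_eq_of_ne, ne_eq,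
        not_false_eq_true, smul_eq_mul, mul_one, add_zero] <;>
      field_simp <;> ring
  all_goals
    simp only [classVec, Matrix.cons_val, Matrix.cons_val_zero, Sum.elim_inl, Sum.elim_inr,
      Pi.add_apply, Pi.smul_apply, Pi.single_eq_of_ne, ne_eq, reduceCtorEq, not_false_eq_true,
      smul_eq_mul, add_zero]
    field_simp

end HubTrees

section ExtremalRadius

/-- `t` is the spectral radius of `G₂(m - 1, m - 3, m - 1)`: the equation, a polynomial in `t ^ 2`,
is the solvability condition of its eigenvalue equations, and the bounds single out the largest
root. -/
structure IsExtremalRadius (m t : ℝ) : Prop where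
  three_le : 3 ≤ m
  pos : 0 < t
  lt_sq : m < t ^ 2
  sq_le : t ^ 2 ≤ m + 1
  eq : ((t ^ 2 - m) * (t ^ 2 - 1) - 1) * ((t ^ 2 - m + 1) * (t ^ 2 - 1) - 2) = 2 * t ^ 2

lemma exists_isExtremalRadius {m : ℝ} (hm : 3 ≤ m) : ∃ t, IsExtremalRadius m t := by
  let g : ℝ → ℝ := fun s => ((s - m) * (s - 1) - 1) * ((s - m + 1) * (s - 1) - 2) - 2 * s
  have hg : ContinuousOn g (Set.Icc m (m + 1)) := by fun_prop
  have hg_left : g m < 0 := by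
    simp only [g]
    nlinarith
  have hg_right : 0 ≤ g (m + 1) := by
    simp only [g]
    nlinarith
  obtain ⟨s, ⟨hms, hsm⟩, hs⟩ :=
    intermediate_value_Icc (le_add_of_nonneg_right zero_le_one) hg ⟨hg_left.le, hg_right⟩
  have hne : m ≠ s := by
    rintro rfl
    exact hg_left.ne hs
  have hsq : √s ^ 2 = s := Real.sq_sqrt (by linarith)
  refine ⟨√s, hm, Real.sqrt_pos.2 (by linarith), ?_, ?_, ?_⟩ <;> rw [hsq]
  exacts [hms.lt_of_ne hne, hsm, sub_eq_zero.1 hs]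

namespace IsExtremalRadius

section Estimates

variable {m t : ℝ} (h : IsExtremalRadius m t)
include h

lemma one_lt_sub_mul : 1 < (t ^ 2 - m) * (t ^ 2 - 1) := by
  obtain ⟨hm, -, hlt, -, heq⟩ := h
  by_contra! hle
  have hsnd : 0 ≤ (t ^ 2 - m + 1) * (t ^ 2 - 1) - 2 := by nlinarith
  nlinarith [mul_nonneg (sub_nonneg.2 hle) hsnd]

lemma sub_mul_sq_lt : (t ^ 2 - m) * t ^ 2 < 2 * (t ^ 2 - m) + 4 := by
  obtain ⟨hm, -, hlt, -, heq⟩ := h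
  by_contra! hle
  have hfst : 3 ≤ (t ^ 2 - m) * (t ^ 2 - 1) - 1 := by linarith
  have hsnd : t ^ 2 + 1 ≤ (t ^ 2 - m + 1) * (t ^ 2 - 1) - 2 := by linarith
  nlinarith [mul_le_mul hfst hsnd (by positivity) (by linarith)]

lemma inv_sub_one_mul : (t ^ 2 - 1)⁻¹ * (t ^ 2 - 1) = 1 :=
  inv_mul_cancel₀ (by linarith [h.three_le, h.lt_sq])

lemma inv_sub_one_pos : 0 < (t ^ 2 - 1)⁻¹ := inv_pos.2 (by linarith [h.three_le, h.lt_sq])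

lemma inv_lt_sub : (t ^ 2 - 1)⁻¹ < t ^ 2 - m :=
  (inv_lt_iff_one_lt_mul₀ (by linarith [h.three_le, h.lt_sq])).2 h.one_lt_sub_mul

lemma sub_inv_mul_eq : (t ^ 2 - m - (t ^ 2 - 1)⁻¹) * (t ^ 2 - m + 1 - 2 * (t ^ 2 - 1)⁻¹) =
    2 * (t ^ 2 * ((t ^ 2 - 1)⁻¹) ^ 2) := by
  have hs : t ^ 2 - 1 ≠ 0 := by linarith [h.three_le, h.lt_sq]
  field_simp
  linear_combination h.eq

end Estimates

section Graphs

variable {m p q : ℕ} {t : ℝ} (h : IsExtremalRadius m t)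
include h

lemma exists_pos_eigenvector (hp : p + 1 = m) (hq : q + 3 = m) :
    ∃ x, (∀ v, 0 < x v) ∧ (adjMat (G2graph p q p)).mulVec x = t • x := by
  have hα : 0 < t ^ 2 - m - (t ^ 2 - 1)⁻¹ := sub_pos.2 h.inv_lt_sub
  have hpm : (p : ℝ) = m - 1 := by simp [← hp]
  have hqm : (q : ℝ) = m - 3 := by simp [← hq]
  refine ⟨_, G2Vec_pos h.pos h.inv_sub_one_pos hα hα, ?_⟩
  rw [adjMat_G2graph_mulVec_G2Vec h.pos.ne' h.inv_sub_one_mul hα.ne' hα.ne'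
    (by linarith) (by linarith)]
  have hgap : t ^ 2 * (t ^ 2 - 1)⁻¹ ^ 2 *
      (1 / (t ^ 2 - m - (t ^ 2 - 1)⁻¹) + 1 / (t ^ 2 - m - (t ^ 2 - 1)⁻¹)) -
      (t ^ 2 - q - 2 - 2 * (t ^ 2 - 1)⁻¹) = 0 := by
    rw [sub_eq_zero, ← add_div, mul_div_assoc', div_eq_iff hα.ne', hqm]
    linear_combination -h.sub_inv_mul_eq
  rw [hgap, zero_div, Pi.single_zero, add_zero]

lemma specRad_G2graph (hp : p + 1 = m) (hq : q + 3 = m) : specRad (G2graph p q p) = t := by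
  obtain ⟨x, hx, hAx⟩ := h.exists_pos_eigenvector hp hq
  exact specRad_eq_of_pos_eigenvector hx hAx

lemma lt_specRad_of_G2graph_lt (hp : p + 1 = m) (hq : q + 3 = m)
    {H : SimpleGraph (HubTreeVertex p q p)} (hH : G2graph p q p < H) : t < specRad H := by
  obtain ⟨x, hx, hAx⟩ := h.exists_pos_eigenvector hp hq
  refine lt_specRad_of_smul_lt_mulVec (fun v => (hx v).le) ?_
  rw [← hAx]
  exact adjMat_mulVec_lt hH hx

lemma lt_specRad_G2graph (hp : p + 1 = m) (hq : q + 2 = m) : t < specRad (G2graph p q q) := by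
  have hA : 0 < t ^ 2 - m - (t ^ 2 - 1)⁻¹ := sub_pos.2 h.inv_lt_sub
  have hpm : (p : ℝ) = m - 1 := by simp [← hp]
  have hqm : (q : ℝ) = m - 2 := by simp [← hq]
  have hR := h.inv_sub_one_mul
  have hR_pos := h.inv_sub_one_pos
  have heq := h.sub_inv_mul_eq
  set R := (t ^ 2 - 1)⁻¹
  set A := t ^ 2 - m - R with hA_def
  have hvec := G2Vec_pos (p := p) (q := q) (r := q) h.pos hR_pos hA (by positivity : 0 < A + 1)
  refine lt_specRad_of_smul_lt_mulVec (fun v => (hvec v).le) ?_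
  rw [adjMat_G2graph_mulVec_G2Vec h.pos.ne' hR hA.ne' (by positivity)
    (by linarith [hA_def]) (by linarith [hA_def])]
  refine lt_add_of_pos_right _ (Pi.single_pos.2 (div_pos ?_ h.pos))
  have hgap : t ^ 2 * R ^ 2 * (1 / A + 1 / (A + 1)) - (t ^ 2 - q - 2 - 2 * R) =
      (A + 1 + R) / (2 * (A + 1)) := by
    have hc : t ^ 2 - q - 2 - 2 * R = A - R := by linarith
    have htR : t ^ 2 * R ^ 2 = A * (A + 1 - R) / 2 := by linarith
    rw [hc, htR]
    field_simp
    ring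
  rw [hgap]
  positivity

lemma lt_specRad_forkGraph_of_add_three (hp : p + 1 = m) (hq : q + 3 = m) :
    t < specRad (forkGraph p q p) := by
  have hd : 0 < t ^ 2 - m := sub_pos.2 h.lt_sq
  have hpm : (p : ℝ) = m - 1 := by simp [← hp]
  have hqm : (q : ℝ) = m - 3 := by simp [← hq]
  have hsmall := h.sub_mul_sq_lt
  set d := t ^ 2 - m with hd_def
  have hvec := forkVec_pos (p := p) (q := q) (r := p) h.pos hd (by positivity : 0 < d + 2) hd
  refine lt_specRad_of_smul_lt_mulVec (fun v => (hvec v).le) ?_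
  rw [adjMat_forkGraph_mulVec_forkVec h.pos.ne' hd.ne' (by positivity) hd.ne'
    (by linarith [hd_def]) (by linarith [hd_def]) (by linarith [hd_def])]
  refine lt_add_of_pos_right _ (Pi.single_pos.2 (div_pos ?_ h.pos))
  have hgap : t ^ 2 / (d + 2) + 1 / d + 1 / d - (t ^ 2 - 2) =
      (d + 1) * (2 * d + 4 - d * t ^ 2) / (d * (d + 2)) := by
    field_simp
    ring
  rw [hgap]
  exact div_pos (mul_pos (by positivity) (sub_pos.2 hsmall)) (by positivity)

lemma lt_specRad_forkGraph_of_add_two (hp : p + 1 = m) (hq : q + 2 = m) :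
    t < specRad (forkGraph p q q) := by
  have hd : 0 < t ^ 2 - m := sub_pos.2 h.lt_sq
  have hpm : (p : ℝ) = m - 1 := by simp [← hp]
  have hqm : (q : ℝ) = m - 2 := by simp [← hq]
  have hsmall := h.sub_mul_sq_lt
  set d := t ^ 2 - m with hd_def
  have hd' : 0 < d + 1 := by positivity
  have hvec := forkVec_pos (p := p) (q := q) (r := q) h.pos hd hd' hd'
  refine lt_specRad_of_smul_lt_mulVec (fun v => (hvec v).le) ?_
  rw [adjMat_forkGraph_mulVec_forkVec h.pos.ne' hd.ne' hd'.ne' hd'.ne'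
    (by linarith [hd_def]) (by linarith [hd_def]) (by linarith [hd_def])]
  refine lt_add_of_pos_right _ (Pi.single_pos.2 (div_pos ?_ h.pos))
  have hgap : t ^ 2 / (d + 1) + 1 / d + 1 / (d + 1) - (t ^ 2 - 2) =
      (d * (2 * d + 4 - d * t ^ 2) + 1) / (d * (d + 1)) := by
    field_simp
    ring
  rw [hgap]
  exact div_pos (add_pos (mul_pos hd (sub_pos.2 hsmall)) one_pos) (by positivity)

end Graphs

end IsExtremalRadius

end ExtremalRadius

section Domination

variable {V : Type*} [Fintype V] [DecidableEq V] {G : SimpleGraph V} [DecidableRel G.Adj]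
  {D : Finset V}

lemma isDomSet_iff_forall_mem_closedNbhd :
    IsDomSet G D ↔ ∀ v, ∃ u ∈ D, v ∈ closedNbhd G u := by
  simp only [IsDomSet, mem_closedNbhd]
  refine forall_congr' fun v => ⟨fun h => ?_, ?_⟩
  · by_cases hv : v ∈ D
    · exact ⟨v, hv, .inl rfl⟩
    · obtain ⟨u, hu, huv⟩ := h hv
      exact ⟨u, hu, .inr huv⟩
  · rintro ⟨u, hu, rfl | huv⟩ hv
    exacts [absurd hu hv, ⟨u, hu, huv⟩]

lemma biUnion_closedNbhd_of_isDomSet (hD : IsDomSet G D) : D.biUnion (closedNbhd G) = univ := by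
  simpa [eq_univ_iff_forall] using isDomSet_iff_forall_mem_closedNbhd.1 hD

omit [Fintype V] [DecidableEq V] [DecidableRel G.Adj] in
lemma isDomSet_mono {E : Finset V} (hD : IsDomSet G D) (hDE : D ⊆ E) : IsDomSet G E :=
  fun v hv =>
    let ⟨u, hu, huv⟩ := hD v fun h => hv (hDE h)
    ⟨u, hDE hu, huv⟩

omit [DecidableEq V] [DecidableRel G.Adj] in
lemma exists_isDomSet_card_eq {k : ℕ} (hk : domNum G ≤ k) (hkV : k ≤ Fintype.card V) :
    ∃ D, IsDomSet G D ∧ #D = k := by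
  obtain ⟨E, hE, hcard⟩ : ∃ E, IsDomSet G E ∧ #E = domNum G :=
    Nat.sInf_mem (s := {k | ∃ E, IsDomSet G E ∧ #E = k})
      ⟨_, univ, fun v hv => absurd (mem_univ v) hv, rfl⟩
  obtain ⟨D, hED, hD⟩ := exists_superset_card_eq (hcard.trans_le hk) hkV
  exact ⟨D, isDomSet_mono hE hED, hD⟩

lemma card_le_card_closedNbhd_union_add {m : ℕ} (hΔ : ∀ v, G.degree v ≤ m) (hD : IsDomSet G D)
    (u v : V) :
    Fintype.card V ≤ #(closedNbhd G u ∪ closedNbhd G v) + #(D \ {u, v}) * (m + 1) := by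
  have hcover : univ ⊆ (closedNbhd G u ∪ closedNbhd G v) ∪ (D \ {u, v}).biUnion (closedNbhd G) := by
    intro x _
    obtain ⟨w, hw, hxw⟩ := isDomSet_iff_forall_mem_closedNbhd.1 hD x
    simp only [mem_union, mem_biUnion, mem_sdiff, mem_insert, mem_singleton]
    grind
  calc Fintype.card V ≤ _ := card_le_card hcover
    _ ≤ _ := card_union_le _ _
    _ ≤ _ := by
      gcongr
      exact card_biUnion_le_card_mul _ _ _ fun w _ => by grind [card_closedNbhd]

lemma pair_subset_closedNbhd_inter {u v : V} (h : G.Adj u v) :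
    {u, v} ⊆ closedNbhd G u ∩ closedNbhd G v := by
  simp [insert_subset_iff, mem_closedNbhd, h, h.symm]

lemma lt_specRad_of_not_pairwiseDisjoint (hG : G.Connected) {m : ℕ} {t : ℝ} (ht : 0 < t)
    (htm : t ^ 2 ≤ m + 1) (hΔ : ∀ v, G.degree v ≤ m) (hD : IsDomSet G D) (h3 : 3 ≤ #D)
    (hcard : Fintype.card V + 1 = #D * (m + 1))
    (h : ¬ (D : Set V).PairwiseDisjoint (closedNbhd G)) : t < specRad G := by
  obtain ⟨u, hu, v, hv, huv, hinter⟩ : ∃ u ∈ D, ∃ v ∈ D, u ≠ v ∧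
      (closedNbhd G u ∩ closedNbhd G v).Nonempty := by
    simpa [Set.PairwiseDisjoint, Set.Pairwise, not_disjoint_iff_nonempty_inter] using h
  have hcover := card_le_card_closedNbhd_union_add hΔ hD u v
  obtain ⟨k, hk⟩ : ∃ k, #D = k + 3 := Nat.exists_eq_add_of_le' h3
  have hk' : #(D \ {u, v}) = k + 1 := by
    rw [card_sdiff_of_subset (by grind), card_pair huv, hk, Nat.add_sub_assoc (by simp)]
  have hunion := card_union_add_card_inter (closedNbhd G u) (closedNbhd G v)
  rw [hk, show (k + 3) * (m + 1) = (k + 1) * (m + 1) + 2 * (m + 1) by ring] at hcard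
  rw [hk'] at hcover
  rw [card_closedNbhd, card_closedNbhd] at hunion
  have hinter_pos := hinter.card_pos
  have hdu := hΔ u
  have hdv := hΔ v
  have hnadj : ¬ G.Adj u v := fun hadj => by
    have hpair := card_le_card (pair_subset_closedNbhd_inter hadj)
    rw [card_pair huv] at hpair
    lia
  obtain ⟨w, -, hw⟩ : ∃ w ∈ univ, w ∉ closedNbhd G u ∪ closedNbhd G v := by
    apply exists_mem_notMem_of_card_lt_card
    rw [card_univ]
    have : m + 1 ≤ (k + 1) * (m + 1) := Nat.le_mul_of_pos_left _ k.succ_pos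
    lia
  rw [notMem_union] at hw
  rw [closedNbhd_inter_closedNbhd huv hnadj] at hinter_pos hunion
  refine lt_specRad_of_sq_le_degree_add_card_inter hG ht huv hw.1 hw.2 ?_ ?_ <;>
    refine htm.trans ?_ <;> norm_cast <;> lia

end Domination

section Links

variable {V : Type*} {G : SimpleGraph V} {u v : V}

/-- Some neighbour of `u` is adjacent to some neighbour of `v`; for disjoint closed neighbourhoods
this says that an edge of `G` joins them. -/
def Linked (G : SimpleGraph V) (u v : V) : Prop :=
  ∃ y z, G.Adj u y ∧ G.Adj v z ∧ G.Adj y z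

lemma Linked.symm (h : Linked G u v) : Linked G v u :=
  let ⟨y, z, huy, hvz, hyz⟩ := h
  ⟨z, y, hvz, huy, hyz.symm⟩

variable [Fintype V] [DecidableEq V] [DecidableRel G.Adj] {D : Finset V}

lemma linked_of_adj_of_disjoint {y z : V} (huv : Disjoint (closedNbhd G u) (closedNbhd G v))
    (hy : y ∈ closedNbhd G u) (hz : z ∈ closedNbhd G v) (hyz : G.Adj y z) : Linked G u v := by
  have hz' := disjoint_right.1 huv hz
  have hy' := disjoint_left.1 huv hy
  refine ⟨y, z, (mem_closedNbhd.1 hy).resolve_left ?_, (mem_closedNbhd.1 hz).resolve_left ?_, hyz⟩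
  · rintro rfl
    exact hz' (mem_closedNbhd.2 (.inr hyz))
  · rintro rfl
    exact hy' (mem_closedNbhd.2 (.inr hyz.symm))

lemma exists_linked_of_isDomSet (hG : G.Connected) (hD : IsDomSet G D)
    (hdisj : (D : Set V).PairwiseDisjoint (closedNbhd G)) (hnt : D.Nontrivial) (hu : u ∈ D) :
    ∃ w ∈ D, w ≠ u ∧ Linked G u w := by
  obtain ⟨v, hv, hvu⟩ := hnt.exists_ne u
  obtain ⟨p⟩ := hG.preconnected u v
  have hv_notMem : v ∉ closedNbhd G u :=
    disjoint_right.1 (hdisj hu hv hvu.symm) (self_mem_closedNbhd v)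
  obtain ⟨d, -, hfst, hsnd⟩ :=
    p.exists_boundary_dart (closedNbhd G u : Set V) (self_mem_closedNbhd u) hv_notMem
  obtain ⟨w, hw, hdw⟩ := isDomSet_iff_forall_mem_closedNbhd.1 hD d.snd
  have hwu : w ≠ u := by
    rintro rfl
    exact hsnd hdw
  exact ⟨w, hw, hwu, linked_of_adj_of_disjoint (hdisj hu hw hwu.symm) hfst hdw d.adj⟩

lemma exists_linked_linked_of_isDomSet (hG : G.Connected) (hD : IsDomSet G D)
    (hdisj : (D : Set V).PairwiseDisjoint (closedNbhd G)) (hcard : #D = 3) :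
    ∃ a b c, a ≠ b ∧ a ≠ c ∧ b ≠ c ∧ D = {a, b, c} ∧ Linked G c a ∧ Linked G c b := by
  have hnt : D.Nontrivial := one_lt_card_iff_nontrivial.1 (by lia)
  obtain ⟨u, hu⟩ := hnt.nonempty
  obtain ⟨v, hv, hvu, huv⟩ := exists_linked_of_isDomSet hG hD hdisj hnt hu
  obtain ⟨w, hw, hwuv⟩ : ∃ w ∈ D, w ∉ ({u, v} : Finset V) :=
    exists_mem_notMem_of_card_lt_card (by rw [card_pair hvu.symm, hcard]; simp)
  obtain ⟨hwu, hwv⟩ : w ≠ u ∧ w ≠ v := by simpa using hwuv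
  have hD_eq : D = {u, v, w} := (eq_of_subset_of_card_le (by grind) (by
    rw [hcard, card_eq_three.2 ⟨u, v, w, hvu.symm, hwu.symm, hwv.symm, rfl⟩])).symm
  obtain ⟨x, hx, hxw, hwx⟩ := exists_linked_of_isDomSet hG hD hdisj hnt hw
  obtain rfl | rfl : x = u ∨ x = v := by grind
  · exact ⟨v, w, x, hwv.symm, hvu, hwu, by grind, huv, hwx.symm⟩
  · exact ⟨u, w, x, hwu.symm, hvu.symm, hwv, by grind, huv.symm, hwx.symm⟩

end Links

section SpanningTrees

lemma exists_range_eq_of_card_eq {V : Type*} {s : Finset V} {k : ℕ} (hs : #s = k) :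
    ∃ g : Fin k → V, Set.range g = s :=
  ⟨fun j => (s.equivFinOfCardEq hs).symm j, by
    rw [Set.range_comp' Subtype.val, (s.equivFinOfCardEq hs).symm.range_eq_univ, Set.image_univ,
      Subtype.range_coe]⟩

lemma fromRel_le {V : Type*} {r : V → V → Prop} {G : SimpleGraph V}
    (h : ∀ x y, r x y → G.Adj x y) : SimpleGraph.fromRel r ≤ G := fun x y hxy =>
  ((fromRel_adj r x y).1 hxy).2.elim (h x y) fun hyx => (h y x hyx).symm

variable {V : Type*} [Fintype V] [DecidableEq V] {G : SimpleGraph V} [DecidableRel G.Adj]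
  {p q r : ℕ} {a b c : V}

lemma exists_hubTreeVertex_equiv (hD : IsDomSet G {a, b, c}) (ha : G.degree a = p + 1)
    (hb : G.degree b = r + 1) (hc : G.degree c = q + 2) (hcard : Fintype.card V = p + q + r + 7)
    {y₁ y₂ z₁ z₂ : V} (hay : G.Adj a y₁) (hby : G.Adj b y₂) (hcz₁ : G.Adj c z₁)
    (hcz₂ : G.Adj c z₂) (hz : z₁ ≠ z₂) :
    ∃ f : HubTreeVertex p q r ≃ V, (∀ i, f (.inl i) = ![a, y₁, z₁, c, z₂, y₂, b] i) ∧
      (∀ j, G.Adj a (f (.inr (.inl j)))) ∧ (∀ j, G.Adj c (f (.inr (.inr (.inl j))))) ∧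
      ∀ j, G.Adj b (f (.inr (.inr (.inr j)))) := by
  have card_eq : ∀ {v y : V} {k : ℕ}, G.degree v = k + 1 → G.Adj v y →
      #((G.neighborFinset v).erase y) = k := fun hv hy => by
    rw [card_erase_of_mem (by simpa using hy), card_neighborFinset_eq_degree, hv,
      Nat.add_sub_cancel]
  obtain ⟨ga, hga⟩ := exists_range_eq_of_card_eq (card_eq ha hay)
  obtain ⟨gb, hgb⟩ := exists_range_eq_of_card_eq (card_eq hb hby)
  obtain ⟨gc, hgc⟩ := exists_range_eq_of_card_eq (k := q)
    (s := ((G.neighborFinset c).erase z₁).erase z₂) (by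
      rw [card_erase_of_mem (by simpa using ⟨hz.symm, hcz₂⟩), card_eq hc hcz₁, Nat.add_sub_cancel])
  let f : HubTreeVertex p q r → V :=
    Sum.elim ![a, y₁, z₁, c, z₂, y₂, b] (Sum.elim ga (Sum.elim gc gb))
  have hf : Function.Surjective f := by
    rw [← Set.range_eq_univ, Set.Sum.elim_range, Set.Sum.elim_range, Set.Sum.elim_range, hga, hgb,
      hgc, Set.eq_univ_iff_forall]
    intro v
    obtain ⟨u, hu, hv⟩ := isDomSet_iff_forall_mem_closedNbhd.1 hD v
    simp only [mem_insert, mem_singleton, mem_closedNbhd, Matrix.range_cons, Matrix.range_empty,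
      Set.union_empty, Set.union_singleton, Set.union_insert, coe_erase, coe_neighborFinset,
      Set.mem_union, Set.mem_insert_iff, Set.mem_singleton_iff, Set.mem_sdiff,
      mem_neighborSet] at hu hv ⊢
    grind
  have hbij : Function.Bijective f :=
    (Fintype.bijective_iff_surjective_and_card f).2 ⟨hf, by
      simp only [Fintype.card_sum, Fintype.card_fin, hcard]
      lia⟩
  refine ⟨Equiv.ofBijective f hbij, fun i => rfl, fun j => ?_, fun j => ?_, fun j => ?_⟩
  · have := hga.subset (Set.mem_range_self j)
    simp_all [f]
  · have := hgc.subset (Set.mem_range_self j)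
    simp_all [f]
  · have := hgb.subset (Set.mem_range_self j)
    simp_all [f]

lemma exists_G2graph_le_comap_or_forkGraph_le_comap (hD : IsDomSet G {a, b, c})
    (hca : Linked G c a) (hcb : Linked G c b) (ha : G.degree a = p + 1)
    (hb : G.degree b = r + 1) (hc : G.degree c = q + 2)
    (hcard : Fintype.card V = p + q + r + 7) :
    ∃ f : HubTreeVertex p q r ≃ V, G2graph p q r ≤ G.comap f ∨ forkGraph p q r ≤ G.comap f := by
  obtain ⟨z₁, y₁, hcz₁, hay, hzy₁⟩ := hca
  obtain ⟨z₂, y₂, hcz₂, hby, hzy₂⟩ := hcb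
  obtain rfl | hz := eq_or_ne z₁ z₂
  · obtain ⟨z₃, hcz₃, hz⟩ : ∃ z₃ ∈ G.neighborFinset c, z₃ ≠ z₁ :=
      exists_mem_ne (by simp [hc]) z₁
    rw [mem_neighborFinset] at hcz₃
    obtain ⟨f, hf, hfa, hfc, hfb⟩ :=
      exists_hubTreeVertex_equiv hD ha hb hc hcard hay hby hcz₁ hcz₃ hz.symm
    refine ⟨f, .inr (fromRel_le ?_)⟩
    rintro x y (⟨rfl, rfl⟩ | ⟨rfl, rfl⟩ | ⟨rfl, rfl⟩ | ⟨rfl, rfl⟩ | ⟨rfl, rfl⟩ | ⟨rfl, rfl⟩ |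
      ⟨j, rfl, rfl⟩ | ⟨j, rfl, rfl⟩ | ⟨j, rfl, rfl⟩) <;> simp [adj_comm, *]
  · obtain ⟨f, hf, hfa, hfc, hfb⟩ :=
      exists_hubTreeVertex_equiv hD ha hb hc hcard hay hby hcz₁ hcz₂ hz
    refine ⟨f, .inl (fromRel_le ?_)⟩
    rintro x y (⟨rfl, rfl⟩ | ⟨rfl, rfl⟩ | ⟨rfl, rfl⟩ | ⟨rfl, rfl⟩ | ⟨rfl, rfl⟩ | ⟨rfl, rfl⟩ |
      ⟨j, rfl, rfl⟩ | ⟨j, rfl, rfl⟩ | ⟨j, rfl, rfl⟩) <;> simp [adj_comm, *]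

end SpanningTrees

section Extremality

variable {V : Type*} [Fintype V] [DecidableEq V] {G : SimpleGraph V} {m p q : ℕ} {t : ℝ}

lemma lt_specRad_or_nonempty_iso_of_linked [DecidableRel G.Adj] (ht : IsExtremalRadius m t)
    (hp : p + 1 = m) (hq : q + 3 = m) (hcard : Fintype.card V = 3 * m + 2) {a b c : V}
    (hD : IsDomSet G {a, b, c}) (hca : Linked G c a) (hcb : Linked G c b)
    (ha : G.degree a = m) (hb : G.degree b = m) (hc : G.degree c + 1 = m) :
    t < specRad G ∨ Nonempty (G ≃g G2graph p q p) := by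
  obtain ⟨f, hf | hf⟩ := exists_G2graph_le_comap_or_forkGraph_le_comap hD hca hcb
    (p := p) (q := q) (r := p) (by lia) (by lia) (by lia) (by lia)
  · obtain hlt | heq := hf.lt_or_eq
    · left
      rw [← specRad_eq_of_iso (Iso.comap f G)]
      exact ht.lt_specRad_of_G2graph_lt hp hq hlt
    · exact .inr ⟨heq ▸ (Iso.comap f G).symm⟩
  · exact .inl ((ht.lt_specRad_forkGraph_of_add_three hp hq).trans_le (specRad_le_of_le_comap f hf))

lemma lt_specRad_of_linked [DecidableRel G.Adj] (ht : IsExtremalRadius m t)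
    (hcard : Fintype.card V = 3 * m + 2) {a b c : V}
    (hD : IsDomSet G {a, b, c}) (hca : Linked G c a) (hcb : Linked G c b)
    (ha : G.degree a = m) (hb : G.degree b + 1 = m) (hc : G.degree c = m) : t < specRad G := by
  have hm : 3 ≤ m := mod_cast ht.three_le
  obtain ⟨f, hf⟩ := exists_G2graph_le_comap_or_forkGraph_le_comap hD hca hcb
    (p := m - 1) (q := m - 2) (r := m - 2) (by lia) (by lia) (by lia) (by lia)
  obtain hf | hf := hf
  · exact (ht.lt_specRad_G2graph (by lia) (by lia)).trans_le (specRad_le_of_le_comap f hf)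
  · exact (ht.lt_specRad_forkGraph_of_add_two (by lia) (by lia)).trans_le
      (specRad_le_of_le_comap f hf)

lemma lt_specRad_or_nonempty_iso_of_pairwiseDisjoint [DecidableRel G.Adj]
    (ht : IsExtremalRadius m t) (hp : p + 1 = m) (hq : q + 3 = m)
    (hcard : Fintype.card V = 3 * m + 2) (hG : G.Connected) (hΔ : ∀ v, G.degree v ≤ m)
    {D : Finset V} (hD : IsDomSet G D) (hD3 : #D = 3)
    (hdisj : (D : Set V).PairwiseDisjoint (closedNbhd G)) :
    t < specRad G ∨ Nonempty (G ≃g G2graph p q p) := by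
  have hsum : ∑ v ∈ D, (G.degree v + 1) = 3 * m + 2 := by
    rw [← hcard, ← card_univ, ← biUnion_closedNbhd_of_isDomSet hD, card_biUnion hdisj]
    exact sum_congr rfl fun v _ => (card_closedNbhd v).symm
  obtain ⟨a, b, c, hab, hac, hbc, rfl, hca, hcb⟩ :=
    exists_linked_linked_of_isDomSet hG hD hdisj hD3
  rw [sum_insert (by simp [hab, hac]), sum_pair hbc] at hsum
  have hda := hΔ a
  have hdb := hΔ b
  have hdc := hΔ c
  obtain hc | hc := hdc.lt_or_eq
  · exact lt_specRad_or_nonempty_iso_of_linked ht hp hq hcard hD hca hcb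
      (by lia) (by lia) (by lia)
  left
  obtain ha | ha := hda.lt_or_eq
  · rw [Finset.insert_comm] at hD
    exact lt_specRad_of_linked ht hcard hD hcb hca (by lia) (by lia) hc
  · exact lt_specRad_of_linked ht hcard hD hca hcb ha (by lia) hc

lemma lt_specRad_or_nonempty_iso (ht : IsExtremalRadius m t) (hp : p + 1 = m) (hq : q + 3 = m)
    (hcard : Fintype.card V = 3 * m + 2) (hG : G.Connected) (hdom : domNum G ≤ 3) :
    t < specRad G ∨ Nonempty (G ≃g G2graph p q p) := by
  classical
  by_cases hΔ : ∀ v, G.degree v ≤ m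
  · obtain ⟨D, hD, hD3⟩ := exists_isDomSet_card_eq hdom (by lia)
    by_cases hdisj : (D : Set V).PairwiseDisjoint (closedNbhd G)
    · exact lt_specRad_or_nonempty_iso_of_pairwiseDisjoint ht hp hq hcard hG hΔ hD hD3 hdisj
    · exact .inl (lt_specRad_of_not_pairwiseDisjoint hG ht.pos ht.sq_le hΔ hD hD3.ge (by lia) hdisj)
  · push Not at hΔ
    obtain ⟨v, hv⟩ := hΔ
    have hv' : (m : ℝ) + 1 ≤ G.degree v := mod_cast hv
    refine .inl (lt_specRad_of_sq_le_degree hG ht.pos (ht.sq_le.trans hv') ?_)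
    rw [hcard]
    push_cast
    linarith [ht.sq_le, ht.three_le]

end Extremality

end DominationSpectral

open DominationSpectral in
theorem domNum_three_min_specRad_n_eq_3m_add_two_general {V : Type*} [Fintype V] [DecidableEq V]
    (m : ℕ) (hm : 3 ≤ m) (hcard : Fintype.card V = 3 * m + 2) (G : SimpleGraph V)
    (hconn : G.Connected) (hdom : domNum G ≤ 3) :
    specRad (G2graph (m - 1) (m - 3) (m - 1)) ≤ specRad G ∧
    (specRad G = specRad (G2graph (m - 1) (m - 3) (m - 1)) ↔
      Nonempty (G ≃g G2graph (m - 1) (m - 3) (m - 1))) := by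
  have hp : m - 1 + 1 = m := by lia
  have hq : m - 3 + 3 = m := by lia
  obtain ⟨t, ht⟩ := exists_isExtremalRadius (m := m) (mod_cast hm)
  rw [ht.specRad_G2graph hp hq]
  have heq : Nonempty (G ≃g G2graph (m - 1) (m - 3) (m - 1)) → specRad G = t := fun ⟨e⟩ =>
    (specRad_eq_of_iso e).trans (ht.specRad_G2graph hp hq)
  obtain hlt | hiso := lt_specRad_or_nonempty_iso ht hp hq hcard hconn hdom
  · exact ⟨hlt.le, fun h => absurd h hlt.ne', heq⟩
  · exact ⟨(heq hiso).ge, fun _ => hiso, heq⟩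

theorem domNum_three_min_specRad_n_eq_3m_add_two (m : ℕ) (hm : 3 ≤ m)
    (G : SimpleGraph (Fin (3 * m + 2))) (hconn : G.Connected) (hdom : domNum G = 3) :
    specRad (G2graph (m - 1) (m - 3) (m - 1)) ≤ specRad G ∧
    (specRad G = specRad (G2graph (m - 1) (m - 3) (m - 1)) ↔
      Nonempty (G ≃g G2graph (m - 1) (m - 3) (m - 1))) :=
  domNum_three_min_specRad_n_eq_3m_add_two_general m hm (Fintype.card_fin _) G hconn hdom.le
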